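/- Let n be a finite index type, and let A, M : ℝ → Matrix n n ℝ be matrix-valued functions such that A has derivative M(t₀)·A(t₀) at the point t₀ (as a function into the normed space of matrices). Then the function t ↦ det(A(t)) has derivative trace(M(t₀))·det(A(t₀)) at t₀. (This Liouville-type determinant formula is the finite-dimensional engine behind the paper's instantaneous change-of-variables formula for the CNF prior: along ODE trajectories the log-Jacobian of the flow evolves with rate equal to the divergence of the vector field, yielding the explicit log-density log p_ψ(z₀) = log p₁(z₁) + ∫₀¹ ∇·v_ψ(z_t, t) dt.) -/

import Mathlib

attribute [local instance] Matrix.normedAddCommGroup Matrix.normedSpace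

/-- Liouville's determinant formula (the engine behind the instantaneous
change-of-variables formula for the CNF prior): if a matrix-valued curve `A`
satisfies the variational equation `A'(t₀) = M(t₀) · A(t₀)`, then
`(det ∘ A)'(t₀) = trace (M t₀) · det (A t₀)`. -/
theorem det_hasDerivAt_of_variational_equation
    {n : Type*} [Fintype n] [DecidableEq n]
    (A M : ℝ → Matrix n n ℝ) (t₀ : ℝ)
    (hA : HasDerivAt A (M t₀ * A t₀) t₀) :
    HasDerivAt (fun t => (A t).det) ((M t₀).trace * (A t₀).det) t₀ := by
  have hent : ∀ i j, HasDerivAt (fun t => A t i j) ((M t₀ * A t₀) i j) t₀ := by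
    intro i j
    exact hasDerivAt_pi.1 (hasDerivAt_pi.1 hA i) j
  have key : (M t₀).trace * (A t₀).det =
      ∑ i, ((A t₀).updateCol i (fun k => (M t₀ * A t₀) k i)).det := by
    have h1 : ∀ i, ((A t₀).updateCol i (fun k => (M t₀ * A t₀) k i)).det
        = ((A t₀).adjugate * (M t₀ * A t₀)) i i := by
      intro i
      rw [← Matrix.cramer_apply, Matrix.cramer_eq_adjugate_mulVec]
      rfl
    simp only [h1]
    change _ = Matrix.trace ((A t₀).adjugate * (M t₀ * A t₀))
    rw [Matrix.trace_mul_comm, Matrix.mul_assoc, Matrix.mul_adjugate]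
    simp [mul_comm]
  rw [key]
  simp only [Matrix.det_apply']
  rw [Finset.sum_comm]
  refine HasDerivAt.fun_sum fun σ _ => ?_
  rw [← Finset.mul_sum]
  refine HasDerivAt.const_mul _ ?_
  convert! HasDerivAt.fun_finsetProd (u := Finset.univ) (fun i _ => hent (σ i) i) using 1
  refine Finset.sum_congr rfl fun i _ => ?_
  rw [← Finset.mul_prod_erase _ _ (Finset.mem_univ i), mul_comm, smul_eq_mul]
  congr 1
  · refine Finset.prod_congr rfl fun j hj => ?_
    rw [Matrix.updateCol_ne (Finset.ne_of_mem_erase hj)]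
  · simp
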